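/- arXiv:2105.03968 — 2 statements merged into one kernel-verified Lean document; each statement's English description precedes it below -/
import Mathlib

section
/- Kneser's Theorem: Let m be a positive integer and let A, B ⊆ ℤ_m be non-empty finite sets. Then |A+B| ≥ min(|A| + |B| - |Sym(A+B)|, m). -/
open Pointwise

/-- The symmetry group of a set `A ⊆ ℤ_m`: all `h` with `A + {h} = A`. -/
def symGroup {m : ℕ} [NeZero m] (A : Finset (ZMod m)) : Finset (ZMod m) :=
  Finset.univ.filter (fun h => A + {h} = A)

namespace KneserAux

variable {G : Type*} [AddCommGroup G] [Fintype G] [DecidableEq G]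

/-- Stabilizer of a finset. -/
def St (C : Finset G) : Finset G := Finset.univ.filter (fun h => ∀ a, a + h ∈ C ↔ a ∈ C)

lemma mem_St {C : Finset G} {h : G} : h ∈ St C ↔ ∀ a, a + h ∈ C ↔ a ∈ C := by
  simp [St]

lemma St_add {C : Finset G} {g h : G} (hg : g ∈ St C) (hh : h ∈ St C) : g + h ∈ St C := by
  rw [mem_St] at *
  intro a
  rw [← add_assoc, hh, hg]

lemma St_neg {C : Finset G} {h : G} (hh : h ∈ St C) : -h ∈ St C := by
  rw [mem_St] at *
  intro a
  rw [← hh (a + -h)]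
  simp

lemma St_sub {C : Finset G} {g h : G} (hg : g ∈ St C) (hh : h ∈ St C) : g - h ∈ St C := by
  rw [sub_eq_add_neg]
  exact St_add hg (St_neg hh)

lemma mem_St_of {C : Finset G} {h : G} (H : ∀ a ∈ C, a + h ∈ C) : h ∈ St C := by
  have him : C.image (fun a => a + h) = C := by
    apply Finset.eq_of_subset_of_card_le
    · intro x hx
      obtain ⟨a, ha, rfl⟩ := Finset.mem_image.1 hx
      exact H a ha
    · rw [Finset.card_image_of_injective _ (add_left_injective h)]
  rw [mem_St]
  intro a
  refine ⟨fun ha => ?_, H a⟩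
  rw [← him] at ha
  obtain ⟨b, hb, hba⟩ := Finset.mem_image.1 ha
  have : b = a := add_right_cancel hba
  rwa [← this]

/-- The product counting bound. -/
lemma prod_bound (C D : Finset G) (x : G) :
    ((St C).filter (fun h => x + h ∈ D)).card * ((St D).filter (fun h => x + h ∉ C)).card
      ≤ (St C ∩ St D).card * (D \ C).card := by
  rw [← Finset.card_product]
  apply Finset.card_le_mul_card_image_of_maps_to (f := fun p : G × G => x + p.1 + p.2)
  · rintro ⟨h, g⟩ hp
    simp only [Finset.mem_product, Finset.mem_filter] at hp
    obtain ⟨⟨h1, h2⟩, h3, h4⟩ := hp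
    simp only [Finset.mem_sdiff]
    refine ⟨(mem_St.1 h3 _).2 h2, fun hc => h4 ?_⟩
    rw [add_right_comm] at hc
    exact (mem_St.1 h1 _).1 hc
  · intro b _
    rcases Finset.eq_empty_or_nonempty (Finset.filter (fun p : G × G => x + p.1 + p.2 = b)
      ((St C).filter (fun h => x + h ∈ D) ×ˢ (St D).filter (fun h => x + h ∉ C))) with he | ⟨⟨h0, g0⟩, h0m⟩
    · rw [he]; simp
    · simp only [Finset.mem_product, Finset.mem_filter] at h0m
      apply Finset.card_le_card_of_injOn (fun p : G × G => p.1 - h0)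
      · rintro ⟨h, g⟩ hp
        simp only [Finset.coe_filter, Set.mem_ofPred_eq, Finset.mem_product, Finset.mem_filter] at hp
        simp only [Finset.coe_inter, Set.mem_inter_iff, Finset.mem_coe]
        refine ⟨St_sub hp.1.1.1 h0m.1.1.1, ?_⟩
        have h1 : h - h0 = g0 - g := by
          have := hp.2.trans h0m.2.symm
          rw [add_assoc, add_assoc, add_left_cancel_iff] at this
          rw [sub_eq_sub_iff_add_eq_add, this, add_comm]
        rw [h1]
        exact St_sub h0m.1.2.1 hp.1.2.1
      · rintro ⟨h, g⟩ hp ⟨h', g'⟩ hp' heq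
        simp only [Finset.coe_filter, Set.mem_ofPred_eq] at hp hp'
        have e : h = h' := by simpa using heq
        subst e
        have := hp.2.trans hp'.2.symm
        rw [add_left_cancel_iff] at this
        rw [this]

lemma K_le (C D : Finset G) (x h0 : G) (h : h0 ∈ St C) (Q : G → Prop) [DecidablePred Q]
    (hx : Q (x + h0)) (hQ : ∀ a, ∀ g ∈ St D, Q a → Q (a + g)) :
    (St C ∩ St D).card ≤ ((St C).filter (fun h => Q (x + h))).card := by
  apply Finset.card_le_card_of_injOn (fun g => h0 + g)
  · intro g hg
    simp only [Finset.coe_inter, Set.mem_inter_iff, Finset.mem_coe] at hg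
    simp only [Finset.coe_filter, Set.mem_ofPred_eq]
    refine ⟨St_add h hg.1, ?_⟩
    rw [← add_assoc]
    exact hQ _ _ hg.2 hx
  · intro a _ b _ hab
    exact add_left_cancel hab

lemma zero_mem_St (C : Finset G) : (0 : G) ∈ St C := by simp [mem_St]

lemma asym (C D : Finset G) (x : G) (hxD : x ∈ D) (hxC : x ∉ C) :
    (St C).card ≤ (D \ C).card + (St C ∩ St D).card ∨
    (St D).card ≤ (C \ D).card + (St C ∩ St D).card ∨
    (St D).card ≤ (D \ C).card := by
  have hk : 0 < (St C ∩ St D).card :=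
    Finset.card_pos.2 ⟨0, Finset.mem_inter.2 ⟨zero_mem_St _, zero_mem_St _⟩⟩
  have b1 := prod_bound C D x
  have b2 := prod_bound D C x
  have s1 := Finset.card_filter_add_card_filter_not (s := St C) (fun h => x + h ∈ D)
  have s2 := Finset.card_filter_add_card_filter_not (s := St D) (fun h => x + h ∈ C)
  have p1 := K_le C D x 0 (zero_mem_St _) (fun a => a ∈ D) (by simpa using hxD)
    (fun a g hg ha => (mem_St.1 hg a).2 ha)
  have q1 := K_le D C x 0 (zero_mem_St _) (fun a => a ∉ C) (by simpa using hxC)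
    (fun a g hg ha hc => ha ((mem_St.1 hg a).1 hc))
  have p2 : ((St C).filter (fun h => x + h ∉ D)).card = 0 ∨
      (St C ∩ St D).card ≤ ((St C).filter (fun h => x + h ∉ D)).card := by
    rcases Finset.eq_empty_or_nonempty ((St C).filter (fun h => x + h ∉ D)) with he | ⟨h0, hh⟩
    · left; rw [he]; rfl
    · right
      rw [Finset.mem_filter] at hh
      exact K_le C D x h0 hh.1 (fun a => a ∉ D) hh.2
        (fun a g hg ha hc => ha ((mem_St.1 hg a).1 hc))
  have q2 : ((St D).filter (fun h => x + h ∈ C)).card = 0 ∨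
      (St D ∩ St C).card ≤ ((St D).filter (fun h => x + h ∈ C)).card := by
    rcases Finset.eq_empty_or_nonempty ((St D).filter (fun h => x + h ∈ C)) with he | ⟨h0, hh⟩
    · left; rw [he]; rfl
    · right
      rw [Finset.mem_filter] at hh
      exact K_le D C x h0 hh.1 (fun a => a ∈ C) hh.2
        (fun a g hg ha => (mem_St.1 hg a).2 ha)
  rw [Finset.inter_comm (St D) (St C)] at b2 q1 q2
  generalize ((St C).filter (fun h => x + h ∈ D)).card = p at *
  generalize ((St C).filter (fun h => x + h ∉ D)).card = p' at *
  generalize ((St D).filter (fun h => x + h ∈ C)).card = q' at *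
  generalize ((St D).filter (fun h => x + h ∉ C)).card = q at *
  generalize (St C ∩ St D).card = k at *
  generalize (St C).card = m1 at *
  generalize (St D).card = m2 at *
  generalize (D \ C).card = u at *
  generalize (C \ D).card = v at *
  rcases p2 with p2 | p2
  · left
    have : k * m1 ≤ k * u := by nlinarith
    have := Nat.le_of_mul_le_mul_left this hk
    omega
  rcases q2 with q2 | q2
  · right; right
    have : k * m2 ≤ k * u := by nlinarith
    exact Nat.le_of_mul_le_mul_left this hk
  by_contra hcon
  push Not at hcon
  obtain ⟨c1, c2, -⟩ := hcon
  obtain ⟨a, rfl⟩ := Nat.exists_eq_add_of_le p1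
  obtain ⟨b, rfl⟩ := Nat.exists_eq_add_of_le q1
  obtain ⟨c, rfl⟩ := Nat.exists_eq_add_of_le p2
  obtain ⟨d, rfl⟩ := Nat.exists_eq_add_of_le q2
  have e1 : k * (k + a + b) ≤ k * u := by nlinarith [Nat.zero_le (a * b)]
  have e2 : k * (k + c + d) ≤ k * v := by nlinarith [Nat.zero_le (c * d)]
  have e1 := Nat.le_of_mul_le_mul_left e1 hk
  have e2 := Nat.le_of_mul_le_mul_left e2 hk
  omega

lemma St_union (C D : Finset G) : (St C ∩ St D).card ≤ (St (C ∪ D)).card := by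
  apply Finset.card_le_card
  intro h hh
  rw [Finset.mem_inter, mem_St, mem_St] at hh
  rw [mem_St]
  intro a
  rw [Finset.mem_union, Finset.mem_union, hh.1, hh.2]

lemma union_bound (n : ℕ) (C D : Finset G) (hC : n ≤ C.card + (St C).card)
    (hD : n ≤ D.card + (St D).card) : n ≤ (C ∪ D).card + (St (C ∪ D)).card := by
  by_cases h1 : D ⊆ C
  · rwa [Finset.union_eq_left.2 h1]
  by_cases h2 : C ⊆ D
  · rwa [Finset.union_eq_right.2 h2]
  obtain ⟨x, hx, hx'⟩ := Finset.not_subset.1 h1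
  obtain ⟨y, hy, hy'⟩ := Finset.not_subset.1 h2
  have a1 := asym C D x hx hx'
  have a2 := asym D C y hy hy'
  rw [Finset.inter_comm (St D) (St C)] at a2
  have u := St_union C D
  have e1 : (C ∪ D).card = (D \ C).card + C.card := by
    rw [Finset.union_comm, ← Finset.card_sdiff_add_card]
  have e2 : (C ∪ D).card = (C \ D).card + D.card := by
    rw [← Finset.card_sdiff_add_card]
  omega

lemma dyson (n : ℕ) : ∀ (A B : Finset G) (a b : G), B.card = n → a ∈ A → b ∈ B →
    ∃ C ⊆ A + B, a + b ∈ C ∧ A.card + B.card ≤ C.card + (St C).card := by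
  induction n using Nat.strong_induction_on with
  | _ n ih =>
    intro A B a b hn ha hb
    by_cases H : ∀ e ∈ A, ∀ y ∈ B, y + (e - b) ∈ A
    · refine ⟨A.image (fun x => x + b), ?_, Finset.mem_image_of_mem _ ha, ?_⟩
      · intro z hz
        obtain ⟨x, hx, rfl⟩ := Finset.mem_image.1 hz
        exact Finset.add_mem_add hx hb
      · rw [Finset.card_image_of_injective _ (add_left_injective b)]
        apply Nat.add_le_add_left
        apply Finset.card_le_card_of_injOn (fun y => y - b)
        · intro y hy
          apply mem_St_of
          intro z hz
          obtain ⟨x, hx, rfl⟩ := Finset.mem_image.1 hz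
          refine Finset.mem_image.2 ⟨y + (x - b), H x hx y hy, ?_⟩
          simp only [sub_eq_add_neg]
          abel
        · intro y _ z _ hyz
          exact sub_left_injective hyz
    · push Not at H
      obtain ⟨e, he, y, hy, hye⟩ := H
      set t := e - b with ht
      have hlt : (B.filter (fun z => z + t ∈ A)).card < n := by
        rw [← hn]
        apply Finset.card_lt_card
        rw [Finset.filter_ssubset]
        exact ⟨y, hy, hye⟩
      obtain ⟨C, hC, hab, hc⟩ := ih _ hlt (A ∪ B.image (fun z => z + t))
        (B.filter (fun z => z + t ∈ A)) a b rfl (Finset.mem_union_left _ ha)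
        (Finset.mem_filter.2 ⟨hb, by rw [ht]; simpa using he⟩)
      refine ⟨C, hC.trans ?_, hab, le_trans (le_of_eq ?_) hc⟩
      · intro z hz
        obtain ⟨u, hu, v, hv, rfl⟩ := Finset.mem_add.1 hz
        rw [Finset.mem_filter] at hv
        rcases Finset.mem_union.1 hu with hu | hu
        · exact Finset.add_mem_add hu hv.1
        · obtain ⟨w, hw, rfl⟩ := Finset.mem_image.1 hu
          have : w + t + v = (v + t) + w := by abel
          rw [this]
          exact Finset.add_mem_add hv.2 hw
      · have e1 : (B.filter (fun z => z + t ∈ A)).card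
            = (A ∩ B.image (fun z => z + t)).card := by
          rw [← Finset.card_image_of_injective _ (add_left_injective t)]
          congr 1
          ext z
          simp only [Finset.mem_image, Finset.mem_filter, Finset.mem_inter]
          constructor
          · rintro ⟨w, ⟨h1, h2⟩, rfl⟩
            exact ⟨h2, w, h1, rfl⟩
          · rintro ⟨h2, w, h1, rfl⟩
            exact ⟨w, ⟨h1, h2⟩, rfl⟩
        rw [e1, Finset.card_union_add_card_inter,
          Finset.card_image_of_injective _ (add_left_injective t)]

lemma main (A B : Finset G) (hA : A.Nonempty) (hB : B.Nonempty) :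
    A.card + B.card ≤ (A + B).card + (St (A + B)).card := by
  have h : ∀ p : G × G, ∃ C : Finset G, p ∈ A ×ˢ B → C ⊆ A + B ∧ p.1 + p.2 ∈ C ∧
      A.card + B.card ≤ C.card + (St C).card := by
    rintro ⟨a, b⟩
    by_cases hp : (a, b) ∈ A ×ˢ B
    · obtain ⟨C, h1, h2, h3⟩ := dyson _ A B a b rfl (Finset.mem_product.1 hp).1
        (Finset.mem_product.1 hp).2
      exact ⟨C, fun _ => ⟨h1, h2, h3⟩⟩
    · exact ⟨∅, fun h => absurd h hp⟩
  choose f hf using h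
  have hne : (A ×ˢ B).Nonempty := hA.product hB
  have key : A.card + B.card ≤ ((A ×ˢ B).sup' hne f).card + (St ((A ×ˢ B).sup' hne f)).card := by
    apply Finset.sup'_induction hne f
      (p := fun C : Finset G => A.card + B.card ≤ C.card + (St C).card)
    · intro C hC D hD
      exact union_bound _ C D hC hD
    · intro p hp
      exact (hf p hp).2.2
  have heq : (A ×ˢ B).sup' hne f = A + B := by
    apply le_antisymm
    · apply Finset.sup'_le
      intro p hp
      exact (hf p hp).1
    · intro z hz
      obtain ⟨a, ha, b, hb, rfl⟩ := Finset.mem_add.1 hz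
      have hp : (a, b) ∈ A ×ˢ B := Finset.mem_product.2 ⟨ha, hb⟩
      exact Finset.le_sup' f hp (hf _ hp).2.1
  rwa [heq] at key

end KneserAux

/-- Kneser's Theorem: for non-empty `A, B ⊆ ℤ_m`,
`|A+B| ≥ min(|A| + |B| - |Sym(A+B)|, m)`. -/
theorem kneser (m : ℕ) [NeZero m] (A B : Finset (ZMod m))
    (hA : A.Nonempty) (hB : B.Nonempty) :
    min ((A.card : ℤ) + (B.card : ℤ) - ((symGroup (A + B)).card : ℤ)) (m : ℤ)
      ≤ ((A + B).card : ℤ) := by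
  apply min_le_of_left_le
  have h := KneserAux.main A B hA hB
  have hs : (KneserAux.St (A + B)).card ≤ (symGroup (A + B)).card := by
    apply Finset.card_le_card
    intro h hh
    have hn := KneserAux.mem_St.1 (KneserAux.St_neg hh)
    simp only [symGroup, Finset.mem_filter, Finset.mem_univ, true_and]
    generalize A + B = C at *
    ext z
    rw [Finset.mem_add, ← hn z]
    simp only [Finset.mem_singleton, exists_eq_left]
    constructor
    · rintro ⟨y, hy, rfl⟩
      simpa using hy
    · intro hz
      exact ⟨_, hz, by simp⟩
  omega
end

section
/- Let m be a positive integer and let A, B ⊆ ℤ_m be non-empty. If |A+B| < |A| + |B| - 1, then |Sym(A+B)| > 1. -/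
open Pointwise

section KneserAux

variable {G : Type*} [AddCommGroup G] [Fintype G] [DecidableEq G]

/-- Stabilizer of a finset, as a finset. -/
def kst (C : Finset G) : Finset G := Finset.univ.filter (fun h => ∀ x, x + h ∈ C ↔ x ∈ C)

theorem mem_kst {C : Finset G} {h : G} : h ∈ kst C ↔ ∀ x, x + h ∈ C ↔ x ∈ C := by
  simp [kst]

theorem kst_zero (C : Finset G) : (0 : G) ∈ kst C := by simp [mem_kst]

theorem kst_add {C : Finset G} {a b : G} (ha : a ∈ kst C) (hb : b ∈ kst C) :
    a + b ∈ kst C := by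
  rw [mem_kst] at *
  intro x
  rw [← add_assoc, hb, ha]

theorem kst_neg {C : Finset G} {a : G} (ha : a ∈ kst C) : -a ∈ kst C := by
  rw [mem_kst] at *
  intro x
  rw [← ha (x + -a)]
  simp

theorem kst_sub {C : Finset G} {a b : G} (ha : a ∈ kst C) (hb : b ∈ kst C) :
    a - b ∈ kst C := by
  rw [sub_eq_add_neg]; exact kst_add ha (kst_neg hb)

theorem card_prod_le {C₁ C₂ : Finset G} {x : G} {P Q S : Finset G}
    (hP : P ⊆ kst C₁) (hQ : Q ⊆ kst C₂)
    (hS : ∀ p ∈ P, ∀ q ∈ Q, x + p + q ∈ S) :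
    P.card * Q.card ≤ (kst C₁ ∩ kst C₂).card * S.card := by
  rw [← Finset.card_product]
  refine Finset.card_le_mul_card_image_of_maps_to (f := fun z : G × G => x + z.1 + z.2) ?_ _ ?_
  · rintro ⟨p, q⟩ h
    simp only [Finset.mem_coe, Finset.mem_product] at h
    exact hS p h.1 q h.2
  · intro y _
    rcases Finset.eq_empty_or_nonempty
      ((P ×ˢ Q).filter (fun z : G × G => x + z.1 + z.2 = y)) with he | ⟨⟨p, q⟩, h0⟩
    · rw [he]; simp
    · refine Finset.card_le_card_of_injOn (fun z => z.1 - p) ?_ ?_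
      · rintro ⟨p', q'⟩ h1
        simp only [Finset.coe_filter, Set.mem_setOf_eq, Finset.mem_filter,
          Finset.mem_product] at h0 h1
        have e : p' - p = q - q' := by
          have := h1.2.trans h0.2.symm
          rw [sub_eq_sub_iff_add_eq_add]
          rw [add_assoc, add_assoc] at this
          have := add_left_cancel this
          rw [this, add_comm]
        simp only [Finset.coe_inter, Set.mem_inter_iff, Finset.mem_coe]
        refine ⟨kst_sub (hP h1.1.1) (hP h0.1.1), ?_⟩
        rw [e]
        exact kst_sub (hQ h0.1.2) (hQ h1.1.2)
      · rintro ⟨p', q'⟩ h1 ⟨p'', q''⟩ h2 h3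
        simp only [Finset.coe_filter, Set.mem_setOf_eq] at h1 h2
        have e : p' = p'' := by simpa using h3
        subst e
        have := h1.2.trans h2.2.symm
        simpa using this

theorem one_side {C₁ C₂ : Finset G} {x : G} (hx₂ : x ∈ C₂) (hx₁ : x ∉ C₁) :
    (kst C₁).card ≤ (C₂ \ C₁).card + (kst C₁ ∩ kst C₂).card ∨
    (kst C₂).card ≤ (C₁ \ C₂).card + (kst C₁ ∩ kst C₂).card ∨
    (kst C₂).card ≤ (C₂ \ C₁).card := by
  set D := kst C₁ ∩ kst C₂ with hD
  have hDpos : 0 < D.card := Finset.card_pos.2 ⟨0, by simp [hD, kst_zero]⟩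
  set P := (kst C₁).filter (fun h => x + h ∈ C₂) with hP
  set P' := (kst C₁).filter (fun h => ¬ x + h ∈ C₂) with hP'
  set Q := (kst C₂).filter (fun h => x + h ∉ C₁) with hQ
  set Q' := (kst C₂).filter (fun h => ¬ x + h ∉ C₁) with hQ'
  have n1 : P.card + P'.card = (kst C₁).card := Finset.card_filter_add_card_filter_not _
  have n2 : Q.card + Q'.card = (kst C₂).card := Finset.card_filter_add_card_filter_not _
  have m1 : ∀ p ∈ kst C₁, ∀ q, (x + p + q ∈ C₁ ↔ x + q ∈ C₁) := by
    intro p hp q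
    rw [add_right_comm]
    exact mem_kst.1 hp _
  have m2 : ∀ q ∈ kst C₂, ∀ p, (x + p + q ∈ C₂ ↔ x + p ∈ C₂) := by
    intro q hq p
    exact mem_kst.1 hq _
  have a1 : P.card * Q.card ≤ D.card * (C₂ \ C₁).card := by
    refine card_prod_le (x := x) (Finset.filter_subset _ _) (Finset.filter_subset _ _) ?_
    intro p hp q hq
    simp only [hP, hQ, Finset.mem_filter] at hp hq
    rw [Finset.mem_sdiff, m1 p hp.1, m2 q hq.1]
    exact ⟨hp.2, hq.2⟩
  have a2 : P'.card * Q'.card ≤ D.card * (C₁ \ C₂).card := by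
    refine card_prod_le (x := x) (Finset.filter_subset _ _) (Finset.filter_subset _ _) ?_
    intro p hp q hq
    simp only [hP', hQ', Finset.mem_filter, not_not] at hp hq
    rw [Finset.mem_sdiff, m1 p hp.1, m2 q hq.1]
    exact ⟨hq.2, hp.2⟩
  have tr : ∀ (S : Finset G) (s : G), (∀ d ∈ D, s + d ∈ S) → D.card ≤ S.card := by
    intro S s h
    exact Finset.card_le_card_of_injOn (fun d => s + d) (fun d hd => h d hd)
      (fun a _ b _ hab => by simpa using hab)
  have p0 : D.card ≤ P.card := by
    refine tr P 0 fun d hd => ?_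
    rw [hD, Finset.mem_inter] at hd
    simp only [hP, Finset.mem_filter, zero_add]
    exact ⟨hd.1, (mem_kst.1 hd.2 _).2 hx₂⟩
  have q0 : D.card ≤ Q.card := by
    refine tr Q 0 fun d hd => ?_
    rw [hD, Finset.mem_inter] at hd
    simp only [hQ, Finset.mem_filter, zero_add]
    exact ⟨hd.2, fun h => hx₁ ((mem_kst.1 hd.1 _).1 h)⟩
  have p1 : P'.card = 0 ∨ D.card ≤ P'.card := by
    rcases Finset.eq_empty_or_nonempty P' with h | ⟨s, hs⟩
    · left; simp [h]
    · right
      refine tr P' s fun d hd => ?_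
      rw [hD, Finset.mem_inter] at hd
      simp only [hP', Finset.mem_filter] at hs ⊢
      exact ⟨kst_add hs.1 hd.1, by rw [← add_assoc, mem_kst.1 hd.2]; exact hs.2⟩
  have q1 : Q'.card = 0 ∨ D.card ≤ Q'.card := by
    rcases Finset.eq_empty_or_nonempty Q' with h | ⟨s, hs⟩
    · left; simp [h]
    · right
      refine tr Q' s fun d hd => ?_
      rw [hD, Finset.mem_inter] at hd
      simp only [hQ', Finset.mem_filter] at hs ⊢
      exact ⟨kst_add hs.1 hd.2, by rw [← add_assoc, mem_kst.1 hd.1]; exact hs.2⟩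
  clear_value P P' Q Q' D
  rw [← n1, ← n2]
  generalize P.card = p at *
  generalize P'.card = p' at *
  generalize Q.card = q at *
  generalize Q'.card = q' at *
  generalize D.card = d at *
  generalize (C₂ \ C₁).card = a at *
  generalize (C₁ \ C₂).card = b at *
  rcases p1 with p1 | p1
  · left
    have : d * p ≤ d * a := by nlinarith
    have := Nat.le_of_mul_le_mul_left this hDpos
    omega
  rcases q1 with q1 | q1
  · right; right
    have : d * q ≤ d * a := by nlinarith
    have := Nat.le_of_mul_le_mul_left this hDpos
    omega
  by_contra hcon
  push Not at hcon
  obtain ⟨h1, h2, -⟩ := hcon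
  have h1' : d * (a + d) < d * (p + p') := Nat.mul_lt_mul_of_pos_left h1 hDpos
  have h2' : d * (b + d) < d * (q + q') := Nat.mul_lt_mul_of_pos_left h2 hDpos
  obtain ⟨p, rfl⟩ := Nat.exists_eq_add_of_le p0
  obtain ⟨q, rfl⟩ := Nat.exists_eq_add_of_le q0
  obtain ⟨p', rfl⟩ := Nat.exists_eq_add_of_le p1
  obtain ⟨q', rfl⟩ := Nat.exists_eq_add_of_le q1
  nlinarith [Nat.zero_le (p * q), Nat.zero_le (p' * q')]

theorem kst_union {C₁ C₂ : Finset G} {N : ℕ} (h1 : N ≤ C₁.card + (kst C₁).card)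
    (h2 : N ≤ C₂.card + (kst C₂).card) :
    N ≤ (C₁ ∪ C₂).card + (kst (C₁ ∪ C₂)).card := by
  by_cases h12 : C₁ ⊆ C₂
  · rwa [Finset.union_eq_right.2 h12]
  by_cases h21 : C₂ ⊆ C₁
  · rwa [Finset.union_eq_left.2 h21]
  obtain ⟨y, hy1, hy2⟩ := Finset.not_subset.1 h12
  obtain ⟨x, hx2, hx1⟩ := Finset.not_subset.1 h21
  have k1 := one_side hx2 hx1
  have k2 := one_side hy1 hy2
  rw [Finset.inter_comm (kst C₂)] at k2
  have hd : (kst C₁ ∩ kst C₂).card ≤ (kst (C₁ ∪ C₂)).card := by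
    apply Finset.card_le_card
    intro h hh
    rw [Finset.mem_inter, mem_kst, mem_kst] at hh
    rw [mem_kst]
    intro x
    rw [Finset.mem_union, Finset.mem_union, hh.1, hh.2]
  have e1 : (C₂ \ C₁).card + C₁.card = (C₁ ∪ C₂).card := by
    rw [Finset.card_sdiff_add_card, Finset.union_comm]
  have e2 : (C₁ \ C₂).card + C₂.card = (C₁ ∪ C₂).card := by
    rw [Finset.card_sdiff_add_card]
  omega

theorem local_piece (n : ℕ) : ∀ (A B : Finset G), B.card = n → ∀ a ∈ A, ∀ b ∈ B,
    ∃ C, C ⊆ A + B ∧ a + b ∈ C ∧ A.card + B.card ≤ C.card + (kst C).card := by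
  induction n using Nat.strong_induction_on with
  | _ n ih =>
    intro A B hn a ha b hb
    by_cases hcase : ∀ a' ∈ A, ∀ b' ∈ B, a' + (b' - b) ∈ A
    · refine ⟨A + B, subset_rfl, Finset.add_mem_add ha hb, ?_⟩
      have hinv : ∀ b' ∈ B, ∀ x, x + (b' - b) ∈ A ↔ x ∈ A := by
        intro b' hb' x
        refine ⟨fun h => ?_, fun h => hcase x h b' hb'⟩
        have himg : A.image (fun z => z + (b' - b)) = A := by
          apply Finset.eq_of_subset_of_card_le
          · intro z hz
            obtain ⟨w, hw, rfl⟩ := Finset.mem_image.1 hz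
            exact hcase w hw b' hb'
          · rw [Finset.card_image_of_injective _ (add_left_injective _)]
        rw [← himg, Finset.mem_image] at h
        obtain ⟨w, hw, e⟩ := h
        rwa [← add_right_cancel e]
      have hmem : ∀ y, y ∈ A + B ↔ y - b ∈ A := by
        intro y
        rw [Finset.mem_add]
        constructor
        · rintro ⟨w, hw, b', hb', rfl⟩
          rw [add_sub_assoc]; exact hcase w hw b' hb'
        · intro h
          exact ⟨y - b, h, b, hb, by simp⟩
      have c1 : A.card ≤ (A + B).card := Finset.card_le_card_add_right ⟨b, hb⟩
      have c2 : B.card ≤ (kst (A + B)).card := by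
        refine Finset.card_le_card_of_injOn (fun z => z - b) ?_ ?_
        · intro b' hb'
          rw [Finset.mem_coe, mem_kst]
          intro x
          rw [hmem, hmem, add_sub_right_comm]
          exact hinv b' hb' _
        · intro u _ v _ h
          simpa using h
      omega
    · push Not at hcase
      obtain ⟨a', ha', b', hb', hnot⟩ := hcase
      set e := a' - b with he
      set A' := A ∪ B.image (fun z => z + e) with hA'
      set B' := B.filter (fun z => z + e ∈ A) with hB'
      have hbB' : b ∈ B' := by simp [hB', he, hb, ha']
      have hlt : B'.card < B.card := by
        apply Finset.card_lt_card
        refine Finset.filter_ssubset.2 ⟨b', hb', ?_⟩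
        convert hnot using 1
        rw [he]; abel_nf
      have hsum : A'.card + B'.card = A.card + B.card := by
        have i : (A ∩ B.image (fun z => z + e)).card = B'.card := by
          rw [← Finset.card_image_of_injective B' (add_left_injective e)]
          congr 1
          ext y
          simp only [hB', Finset.mem_inter, Finset.mem_image, Finset.mem_filter]
          constructor
          · rintro ⟨h, z, hz, rfl⟩
            exact ⟨z, ⟨hz, h⟩, rfl⟩
          · rintro ⟨z, ⟨hz, h⟩, rfl⟩
            exact ⟨h, z, hz, rfl⟩
        rw [← i, hA', Finset.card_union_add_card_inter,
          Finset.card_image_of_injective B (add_left_injective e)]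
      obtain ⟨C, hC, hm, hc⟩ := ih B'.card (hn ▸ hlt) A' B' rfl a
        (Finset.mem_union_left _ ha) b hbB'
      refine ⟨C, hC.trans ?_, hm, by omega⟩
      intro y hy
      obtain ⟨u, hu, v, hv, rfl⟩ := Finset.mem_add.1 hy
      simp only [hB', Finset.mem_filter] at hv
      rw [hA', Finset.mem_union, Finset.mem_image] at hu
      rcases hu with hu | ⟨z, hz, rfl⟩
      · exact Finset.add_mem_add hu hv.1
      · have : z + e + v = (v + e) + z := by abel
        rw [this]
        exact Finset.add_mem_add hv.2 hz

theorem kneser_weak (A B : Finset G) (hA : A.Nonempty) (hB : B.Nonempty) :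
    A.card + B.card ≤ (A + B).card + (kst (A + B)).card := by
  obtain ⟨a, ha⟩ := hA
  obtain ⟨b, hb⟩ := hB
  let F := (A + B).powerset.filter (fun C => A.card + B.card ≤ C.card + (kst C).card)
  have hF : F.Nonempty := by
    obtain ⟨C, h1, _, h3⟩ := local_piece _ A B rfl a ha b hb
    exact ⟨C, by simp only [F, Finset.mem_filter, Finset.mem_powerset]; exact ⟨h1, h3⟩⟩
  obtain ⟨C, hC, hmax⟩ := Finset.exists_max_image F Finset.card hF
  simp only [F, Finset.mem_filter, Finset.mem_powerset] at hC hmax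
  have hsub : A + B ⊆ C := by
    intro c hc
    obtain ⟨a, ha, b, hb, rfl⟩ := Finset.mem_add.1 hc
    obtain ⟨C', h1, h2, h3⟩ := local_piece _ A B rfl a ha b hb
    have := hmax (C ∪ C') ⟨Finset.union_subset hC.1 h1, kst_union hC.2 h3⟩
    rw [Finset.eq_of_subset_of_card_le Finset.subset_union_left this]
    exact Finset.mem_union_right _ h2
  rw [← Finset.Subset.antisymm hC.1 hsub]
  exact hC.2

end KneserAux

/-- If `|A+B| < |A| + |B| - 1` for non-empty `A, B ⊆ ℤ_m`, then `|Sym(A+B)| > 1`. -/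
theorem small_sumset_nontrivial_sym (m : ℕ) [NeZero m] (A B : Finset (ZMod m))
    (hA : A.Nonempty) (hB : B.Nonempty)
    (h : ((A + B).card : ℤ) < (A.card : ℤ) + (B.card : ℤ) - 1) :
    1 < (symGroup (A + B)).card := by
  have k := kneser_weak A B hA hB
  have hs : kst (A + B) ⊆ symGroup (A + B) := by
    intro t ht
    simp only [symGroup, Finset.mem_filter, Finset.mem_univ, true_and]
    apply Finset.eq_of_subset_of_card_le
    · intro y hy
      obtain ⟨x, hx, t', ht', rfl⟩ := Finset.mem_add.1 hy
      rw [Finset.mem_singleton] at ht'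
      subst ht'
      exact (mem_kst.1 ht x).2 hx
    · rw [Finset.card_add_singleton]
  have := Finset.card_le_card hs
  omega
end
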